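/- The function f is a first integral of V, i.e., ⟨V(x), ∇f(x)⟩ = 0 for all x ∈ Ω, if and only if |f(x)|^{r} · div W(x) = div V(x) for every x ∈ Ω \ Γ. -/

import Mathlib

open Filter Topology

/-- Partial derivative of `g : ℝⁿ → ℝ` in the `i`-th coordinate direction. -/
noncomputable def pderiv' {n : ℕ} (g : (Fin n → ℝ) → ℝ) (i : Fin n) (x : Fin n → ℝ) : ℝ :=
  fderiv ℝ g x (Pi.single i 1)

/-- Divergence of a vector field on ℝⁿ. -/
noncomputable def diverg {n : ℕ} (V : (Fin n → ℝ) → (Fin n → ℝ)) (x : Fin n → ℝ) : ℝ :=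
  ∑ i, pderiv' (fun y => V y i) i x

/-- Gradient of `g : ℝⁿ → ℝ`. -/
noncomputable def grad' {n : ℕ} (g : (Fin n → ℝ) → ℝ) (x : Fin n → ℝ) : Fin n → ℝ :=
  fun i => pderiv' g i x

/-- The Euclidean inner product on ℝⁿ. -/
noncomputable def dotp {n : ℕ} (u w : Fin n → ℝ) : ℝ := ∑ i, u i * w i

/-- Condition (A): for every `x* ∈ Γ`, `|f x|^(r+1) · div W x → 0` as `x → x*`
with `x ∈ Ω \ Γ`. -/
def CondA {n : ℕ} (Ω Γ : Set (Fin n → ℝ)) (f : (Fin n → ℝ) → ℝ) (r : ℝ)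
    (W : (Fin n → ℝ) → (Fin n → ℝ)) : Prop :=
  ∀ xs ∈ Γ, Filter.Tendsto (fun x => |f x| ^ (r + 1) * diverg W x)
    (nhdsWithin xs (Ω \ Γ)) (nhds 0)

/-- Condition (B): for every `x* ∈ Γ` with `V x* = 0`, one has
`|f x|^r · div W x → 0` and `|f x|^(r+1) · ∂(div W)/∂x_i x → 0` as `x → x*`
with `x ∈ Ω \ Γ`, for each `i`. -/
def CondB {n : ℕ} (Ω Γ : Set (Fin n → ℝ)) (f : (Fin n → ℝ) → ℝ) (r : ℝ)
    (V W : (Fin n → ℝ) → (Fin n → ℝ)) : Prop :=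
  ∀ xs ∈ Γ, V xs = 0 →
    Filter.Tendsto (fun x => |f x| ^ r * diverg W x) (nhdsWithin xs (Ω \ Γ)) (nhds 0) ∧
    ∀ i : Fin n, Filter.Tendsto (fun x => |f x| ^ (r + 1) * pderiv' (diverg W) i x)
      (nhdsWithin xs (Ω \ Γ)) (nhds 0)

/-- The product rule `|f|^r · div (|f|^(-r) V) = div V - r ⟨V, ∇f⟩ / f` at a point where
`f` does not vanish. -/
theorem abs_rpow_mul_diverg {n : ℕ} {f : (Fin n → ℝ) → ℝ} {V W : (Fin n → ℝ) → (Fin n → ℝ)}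
    {r : ℝ} {x : Fin n → ℝ} (hf : DifferentiableAt ℝ f x) (hV : DifferentiableAt ℝ V x)
    (hfx : f x ≠ 0) (hW : ∀ᶠ y in 𝓝 x, W y = |f y| ^ (-r) • V y) :
    |f x| ^ r * diverg W x = diverg V x - r * dotp (V x) (grad' f x) / f x := by
  have hpow : HasFDerivAt (fun y => Real.exp (Real.log (f y) * (-r)))
      (Real.exp (Real.log (f x) * (-r)) • ((-r) • ((f x)⁻¹ • fderiv ℝ f x))) x :=
    ((hf.hasFDerivAt.log hfx).mul_const (-r)).exp
  have hrpow : ∀ y, f y ≠ 0 → |f y| ^ (-r) = Real.exp (Real.log (f y) * (-r)) := fun y hy => by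
    rw [Real.rpow_def_of_pos (abs_pos.mpr hy), Real.log_abs]
  have hcancel : |f x| ^ r * Real.exp (Real.log (f x) * (-r)) = 1 := by
    rw [← hrpow x hfx, ← Real.rpow_add (abs_pos.mpr hfx), add_neg_cancel, Real.rpow_zero]
  have hcomp : ∀ i, |f x| ^ r * pderiv' (fun y => W y i) i x =
      pderiv' (fun y => V y i) i x - r / f x * (V x i * pderiv' f i x) := fun i => by
    have hVi : HasFDerivAt (fun y => V y i) (fderiv ℝ (fun y => V y i) x) x :=
      (differentiableAt_pi.mp hV i).hasFDerivAt
    have hWi : (fun y => W y i) =ᶠ[𝓝 x]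
        fun y => Real.exp (Real.log (f y) * (-r)) * V y i := by
      filter_upwards [hW, hf.continuousAt.eventually_ne hfx] with y hy hfy
      rw [hy, Pi.smul_apply, smul_eq_mul, hrpow y hfy]
    have hWd := (hpow.mul hVi).congr_of_eventuallyEq hWi
    simp only [pderiv', hWd.fderiv, add_apply,
      smul_apply, smul_eq_mul]
    linear_combination (fderiv ℝ (fun y => V y i) x (Pi.single i 1) -
      r / f x * (V x i * fderiv ℝ f x (Pi.single i 1))) * hcancel
  simp only [diverg, dotp, grad', Finset.mul_sum, hcomp, Finset.sum_sub_distrib, Finset.sum_div]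
  congr 1
  exact Finset.sum_congr rfl fun i _ => by ring

/-- A point at which the gradient of `f` is nonzero is a limit of points where `f ≠ 0`. -/
theorem frequently_ne_zero_of_grad'_ne_zero {n : ℕ} {f : (Fin n → ℝ) → ℝ} {x : Fin n → ℝ}
    (h : grad' f x ≠ 0) : ∃ᶠ y in 𝓝 x, f y ≠ 0 := by
  intro hzero
  have hloc : f =ᶠ[𝓝 x] fun _ => 0 := hzero.mono fun y hy => not_not.mp hy
  refine h (funext fun i => ?_)
  simp [grad', pderiv', hloc.fderiv_eq]

/-- `⟨V, ∇f⟩` is continuous where `V` is continuous and `f` is continuously differentiable. -/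
theorem continuousAt_dotp_grad' {n : ℕ} {f : (Fin n → ℝ) → ℝ} {V : (Fin n → ℝ) → (Fin n → ℝ)}
    {x : Fin n → ℝ} (hV : ContinuousAt V x) (hf : ContinuousAt (fderiv ℝ f) x) :
    ContinuousAt (fun y => dotp (V y) (grad' f y)) x := by
  simp only [dotp, grad', pderiv']
  exact tendsto_finsetSum _ fun i _ =>
    (continuousAt_pi.mp hV i).mul (hf.clm_apply continuousAt_const)

/-- `f` is a first integral of `V` (i.e. `⟨V x, ∇f x⟩ = 0` for all `x ∈ Ω`) iff
`|f x|^r · div W x = div V x` for every `x ∈ Ω \ Γ`. -/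
theorem stmt2 {n : ℕ} (hn : 2 ≤ n) (Ω Γ : Set (Fin n → ℝ)) (hΩ : IsOpen Ω)
    (f : (Fin n → ℝ) → ℝ) (s : ℕ) (hs : 2 ≤ s) (hf : ContDiffOn ℝ s f Ω)
    (hΓ : Γ = {x | x ∈ Ω ∧ f x = 0}) (hΓne : Γ.Nonempty)
    (hreg : ∀ x ∈ Γ, grad' f x ≠ 0)
    (V : (Fin n → ℝ) → (Fin n → ℝ)) (hV : ContDiffOn ℝ s V Ω)
    (r : ℝ) (hr : 0 < r)
    (W : (Fin n → ℝ) → (Fin n → ℝ))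
    (hW : ∀ x ∈ Ω \ Γ, W x = |f x| ^ (-r) • V x) :
    (∀ x ∈ Ω, dotp (V x) (grad' f x) = 0) ↔
      (∀ x ∈ Ω \ Γ, |f x| ^ r * diverg W x = diverg V x) := by
  have hs' : (s : WithTop ℕ∞) ≠ 0 := by exact_mod_cast (by omega : s ≠ 0)
  have hmem : ∀ {x}, x ∈ Ω → (x ∈ Ω \ Γ ↔ f x ≠ 0) := fun {x} hx => by simp [hΓ, hx]
  have hfd : ∀ x ∈ Ω, DifferentiableAt ℝ f x := fun x hx =>
    (hf.differentiableOn hs').differentiableAt (hΩ.mem_nhds hx)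
  have key : ∀ x ∈ Ω, f x ≠ 0 →
      |f x| ^ r * diverg W x = diverg V x - r * dotp (V x) (grad' f x) / f x := fun x hx hfx => by
    refine abs_rpow_mul_diverg (hfd x hx)
      ((hV.differentiableOn hs').differentiableAt (hΩ.mem_nhds hx)) hfx ?_
    filter_upwards [hΩ.mem_nhds hx, (hfd x hx).continuousAt.eventually_ne hfx] with y hy hfy
    exact hW y ((hmem hy).mpr hfy)
  constructor
  · intro h x hx
    rw [key x hx.1 ((hmem hx.1).mp hx), h x hx.1]
    simp
  · intro h
    have hoff : ∀ x ∈ Ω, f x ≠ 0 → dotp (V x) (grad' f x) = 0 := fun x hx hfx => by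
      have h1 := (key x hx hfx).symm.trans (h x ((hmem hx).mpr hfx))
      rw [sub_eq_self] at h1
      simpa [hfx, hr.ne'] using h1
    intro x hx
    by_cases hfx : f x = 0
    · by_contra hne
      have hcont := continuousAt_dotp_grad' (hV.continuousOn.continuousAt (hΩ.mem_nhds hx))
        ((hf.continuousOn_fderiv_of_isOpen hΩ
          (by exact_mod_cast (by omega : 1 ≤ s))).continuousAt (hΩ.mem_nhds hx))
      obtain ⟨y, hfy, hy, hyne⟩ :=
        ((frequently_ne_zero_of_grad'_ne_zero (hreg x (by rw [hΓ]; exact ⟨hx, hfx⟩))).and_eventually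
          ((hΩ.eventually_mem hx).and (hcont.eventually_ne hne))).exists
      exact hyne (hoff y hy hfy)
    · exact hoff x hx hfx
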